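/- For a non-degenerate C*-inclusion B ⊆ A, the following are equivalent: (i) the inclusion B ⊆ A is essential; (ii) there exists a set Φ of states of B such that every A-lift of Φ is jointly essentially faithful; (iii) there exists a set Φ of pure states of B such that every A-lift of Φ is jointly essentially faithful; (iii') there exists a set Φ of pure states of B such that every pure A-lift of Φ is jointly essentially faithful. -/

import Mathlib

open scoped ComplexOrder

/-- A state: a positive linear functional of norm one. -/
def IsState {E : Type*} [SeminormedAddCommGroup E] [NormedSpace ℂ E] [Mul E] [Star E]
    (φ : E →L[ℂ] ℂ) : Prop :=
  (∀ a : E, 0 ≤ φ (star a * a)) ∧ ‖φ‖ = 1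

/-- A pure state: an extreme point of the set of states. -/
def IsPureState {E : Type*} [SeminormedAddCommGroup E] [NormedSpace ℂ E] [Mul E] [Star E]
    (φ : E →L[ℂ] ℂ) : Prop :=
  φ ∈ Set.extremePoints ℝ {ψ : E →L[ℂ] ℂ | IsState ψ}

/-- `K_ψ = {a | ψ (x * a * y) = 0 for all x, y}`. -/
def Kset {E F : Type*} [Mul E] [Zero F] (ψ : E → F) : Set E :=
  {a | ∀ x y : E, ψ (x * a * y) = 0}

/-- Non-degeneracy of the inclusion `Bs ⊆ A`. -/
def NondegSet {A : Type*} [NonUnitalCStarAlgebra A] (Bs : Set A) : Prop :=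
  closure (Submodule.span ℂ {x : A | ∃ b ∈ Bs, ∃ a : A, x = b * a} : Set A) = Set.univ

/-- The inclusion `Bs ⊆ A` is essential. -/
def EssentialIncl {A : Type*} [NonUnitalCStarAlgebra A] (Bs : Set A) : Prop :=
  ∀ L : TwoSidedIdeal A, IsClosed (L : Set A) → (L : Set A) ≠ Set.univ →
    Bs ∩ (L : Set A) = {0} → (L : Set A) = {0}

/-!
If `B ⊆ A` is essential, lift every pure state of `B`. The closed ideal `⋂ Kset (σ φ)` meets `B`
trivially, because pure states detect the positive elements of `B`; hence it is zero.

Conversely, let `L` be a closed ideal with `B ∩ L = {0}`. The pullback of `B → A ⧸ L ← A` then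
embeds isometrically into `A`, so by Hahn–Banach every state of `B` extends to a contractive
functional on `A` that vanishes on `L`. A contractive extension of a state is a state, and an
extreme point of the set of all such extensions of a pure state is pure. A lift of `Φ` made of
these functionals has `L ⊆ ⋂ Kset (σ φ)`, so its faithfulness forces `L = {0}`.
-/

open Filter Topology

section Convexity

variable {E F : Type*} [AddCommGroup E] [Module ℝ E] [AddCommGroup F] [Module ℝ F]

theorem isExtreme_fiber (T : E →ₗ[ℝ] F) {s : Set E} {t : Set F} (hT : Set.MapsTo T s t)
    {y : F} (hy : y ∈ t.extremePoints ℝ) : IsExtreme ℝ s {x ∈ s | T x = y} := by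
  refine ⟨fun x hx => hx.1, fun x₁ hx₁ x₂ hx₂ x hx hmem => ⟨hx₁, ?_⟩⟩
  refine hy.2 (hT hx₁) (hT hx₂) ?_
  rw [← hx.2]
  exact image_openSegment ℝ T.toAffineMap x₁ x₂ ▸ Set.mem_image_of_mem T hmem

end Convexity

theorem exists_extension_norm_eq_of_linearIsometry {𝕜 E F : Type*} [RCLike 𝕜]
    [NormedAddCommGroup E] [NormedSpace 𝕜 E] [NormedAddCommGroup F] [NormedSpace 𝕜 F]
    (i : E →ₗᵢ[𝕜] F) (f : E →L[𝕜] 𝕜) : ∃ g : F →L[𝕜] 𝕜, (∀ x, g (i x) = f x) ∧ ‖g‖ = ‖f‖ := by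
  obtain ⟨g, hg, hnorm⟩ := exists_extension_norm_eq (LinearMap.range i.toLinearMap)
    (f.comp (i.equivRange.symm : LinearMap.range i.toLinearMap →L[𝕜] E))
  refine ⟨g, fun x => by simpa using hg (i.equivRange x), hnorm.trans ?_⟩
  exact f.opNorm_comp_linearIsometryEquiv i.equivRange.symm

section UnitalFunctionals

variable {U : Type*} [NormedRing U] [StarRing U] [CStarRing U] [NormedAlgebra ℂ U] [StarModule ℂ U]

theorem norm_add_smul_one_sq_le {a : U} (ha : IsSelfAdjoint a) (t : ℝ) :
    ‖a + (t * Complex.I) • (1 : U)‖ ^ 2 ≤ ‖a‖ ^ 2 + t ^ 2 * ‖(1 : U)‖ := by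
  have hstar : star (a + (t * Complex.I) • (1 : U)) * (a + (t * Complex.I) • (1 : U)) =
      a * a + ((t ^ 2 : ℝ) : ℂ) • (1 : U) := by
    have hI : (t * Complex.I) * (t * Complex.I) = -(t ^ 2 : ℂ) := by
      linear_combination (t : ℂ) ^ 2 * Complex.I_mul_I
    have hconj : star (t * Complex.I) = -(t * Complex.I) := by simp
    simp only [star_add, star_smul, star_one, ha.star_eq, hconj, add_mul, mul_add,
      smul_mul_assoc, mul_smul_comm, one_mul, mul_one, smul_add, smul_neg, smul_smul, neg_mul,
      hI, neg_smul, neg_neg, Complex.ofReal_pow]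
    abel
  calc ‖a + (t * Complex.I) • (1 : U)‖ ^ 2 = ‖a * a + ((t ^ 2 : ℝ) : ℂ) • (1 : U)‖ := by
        rw [sq, ← CStarRing.norm_star_mul_self, hstar]
    _ ≤ ‖a * a‖ + ‖((t ^ 2 : ℝ) : ℂ) • (1 : U)‖ := norm_add_le _ _
    _ ≤ ‖a‖ ^ 2 + t ^ 2 * ‖(1 : U)‖ := by
      rw [norm_smul, Complex.norm_real, Real.norm_of_nonneg (sq_nonneg t), sq ‖a‖]
      gcongr
      exact norm_mul_le a a

theorem im_apply_eq_zero_of_apply_one {g : U →L[ℂ] ℂ} (hg : ‖g‖ ≤ 1) (h1 : g 1 = 1) {a : U}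
    (ha : IsSelfAdjoint a) : (g a).im = 0 := by
  have hbound (t : ℝ) : ((g a).im + t) ^ 2 ≤ ‖a‖ ^ 2 + t ^ 2 * ‖(1 : U)‖ :=
    calc ((g a).im + t) ^ 2 = (g (a + (t * Complex.I) • (1 : U))).im ^ 2 := by simp [h1]
      _ ≤ ‖g (a + (t * Complex.I) • (1 : U))‖ ^ 2 :=
        sq_le_sq.2 ((Complex.abs_im_le_norm _).trans_eq (abs_norm _).symm)
      _ ≤ ‖a + (t * Complex.I) • (1 : U)‖ ^ 2 := by
        gcongr
        exact (g.le_of_opNorm_le hg _).trans_eq (one_mul _)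
      _ ≤ ‖a‖ ^ 2 + t ^ 2 * ‖(1 : U)‖ := norm_add_smul_one_sq_le ha t
  have : Nontrivial U := ⟨1, 0, fun h => by simp [h] at h1⟩
  rw [norm_one] at hbound
  by_contra hne
  have hcancel : (g a).im * (‖a‖ ^ 2 / (g a).im) = ‖a‖ ^ 2 := by field_simp
  nlinarith [hbound (‖a‖ ^ 2 / (g a).im), sq_nonneg ‖a‖, sq_pos_of_ne_zero hne]

end UnitalFunctionals

section Unital

variable {U : Type*} [CStarAlgebra U] [PartialOrder U] [StarOrderedRing U]

theorem apply_nonneg_of_apply_one {g : U →L[ℂ] ℂ} (hg : ‖g‖ ≤ 1) (h1 : g 1 = 1) {a : U}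
    (ha : 0 ≤ a) : 0 ≤ g a := by
  refine Complex.nonneg_iff.2 ⟨?_, (im_apply_eq_zero_of_apply_one hg h1 ha.isSelfAdjoint).symm⟩
  have hle : a ≤ algebraMap ℝ U ‖a‖ :=
    (CStarAlgebra.norm_le_iff_le_algebraMap a (norm_nonneg a) ha).1 le_rfl
  have hnorm : ‖algebraMap ℝ U ‖a‖ - a‖ ≤ ‖a‖ :=
    (CStarAlgebra.norm_le_iff_le_algebraMap _ (norm_nonneg a) (sub_nonneg.2 hle)).2
      (sub_le_self _ ha)
  have hre : (g (algebraMap ℝ U ‖a‖ - a)).re = ‖a‖ - (g a).re := by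
    rw [Algebra.algebraMap_eq_smul_one, map_sub, ← Complex.coe_smul, map_smul, h1]
    simp
  have : (g (algebraMap ℝ U ‖a‖ - a)).re ≤ ‖a‖ :=
    (Complex.re_le_norm _).trans ((g.le_of_opNorm_le hg _).trans (by rwa [one_mul]))
  linarith

theorem norm_two_mul_sub_one_le_one {a : U} (ha : 0 ≤ a) (hle : ‖a‖ ≤ 1) :
    ‖2 * a - 1‖ ≤ 1 := by
  have hsq : a ^ 2 ≤ a := by
    simpa using CStarAlgebra.pow_antitone ha ((CStarAlgebra.norm_le_one_iff_of_nonneg a).1 hle)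
      one_le_two
  have hsa : star (2 * a - 1) = 2 * a - 1 := by
    rw [star_sub, star_mul, star_ofNat, star_one, ha.isSelfAdjoint.star_eq,
      (Commute.ofNat_right a 2).eq]
  have hmul : star (2 * a - 1) * (2 * a - 1) = 1 - (4 : ℝ) • (a - a ^ 2) := by
    rw [hsa, ofNat_smul_eq_nsmul ℝ]
    noncomm_ring
  have hnorm : ‖star (2 * a - 1) * (2 * a - 1)‖ ≤ 1 := by
    rw [CStarAlgebra.norm_le_one_iff_of_nonneg _ (star_mul_self_nonneg _), hmul]
    exact sub_le_self _ (smul_nonneg (by norm_num) (sub_nonneg.2 hsq))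
  rw [CStarRing.norm_star_mul_self] at hnorm
  exact (abs_norm _).ge.trans (abs_le_one_iff_mul_self_le_one.2 hnorm)

end Unital

theorem norm_star_mul_self_le_one {R : Type*} [NonUnitalNormedRing R] [StarRing R] [CStarRing R]
    {c : R} (hc : ‖c‖ ≤ 1) : ‖star c * c‖ ≤ 1 := by
  rw [CStarRing.norm_star_mul_self]
  exact mul_le_one₀ hc (norm_nonneg c) hc

section States

variable {E : Type*} [NonUnitalCStarAlgebra E]

theorem exists_isApproximateUnit_isSelfAdjoint (E : Type*) [NonUnitalCStarAlgebra E] :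
    ∃ l : Filter E, l.IsApproximateUnit ∧ ∀ᶠ e in l, IsSelfAdjoint e ∧ ‖e‖ ≤ 1 := by
  let := CStarAlgebra.spectralOrder E
  have := CStarAlgebra.spectralOrderedRing E
  have hl := CStarAlgebra.increasingApproximateUnit E
  exact ⟨_, hl.toIsApproximateUnit,
    (hl.eventually_nonneg.mono fun _ he => he.isSelfAdjoint).and hl.eventually_norm⟩

variable {φ : E →L[ℂ] ℂ}

theorem norm_apply_star_mul_sq_le (hφ : ∀ a, 0 ≤ φ (star a * a)) (a b : E) :
    ‖φ (star a * b)‖ ^ 2 ≤ ‖φ (star a * a)‖ * ‖φ (star b * b)‖ := by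
  let := CStarAlgebra.spectralOrder E
  have := CStarAlgebra.spectralOrderedRing E
  let f : E →ₚ[ℂ] ℂ := PositiveLinearMap.mk₀ (φ : E →ₗ[ℂ] ℂ) fun x hx => by
    obtain ⟨y, rfl⟩ := CStarAlgebra.nonneg_iff_eq_star_mul_self.1 hx
    exact hφ y
  have hnorm (c : E) : ‖f.toPreGNS c‖ ^ 2 = ‖φ (star c * c)‖ := by
    have h : (‖f.toPreGNS c‖ : ℂ) ^ 2 = φ (star c * c) := f.preGNS_norm_sq (f.toPreGNS c)
    rw [← h, norm_pow, Complex.norm_real, norm_norm]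
  have hinner : inner ℂ (f.toPreGNS a) (f.toPreGNS b) = φ (star a * b) := f.preGNS_inner_def _ _
  rw [← hnorm, ← hnorm, ← mul_pow, ← hinner]
  gcongr
  exact norm_inner_le_norm _ _

theorem norm_apply_sq_le (hφ : ∀ a, 0 ≤ φ (star a * a)) {C : ℝ}
    (hC : ∀ c, ‖c‖ ≤ 1 → ‖φ (star c * c)‖ ≤ C) (a : E) :
    ‖φ a‖ ^ 2 ≤ C * ‖φ (star a * a)‖ := by
  obtain ⟨l, hl, hsa⟩ := exists_isApproximateUnit_isSelfAdjoint E
  have := hl.neBot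
  have hlim : Tendsto (fun e => ‖φ (e * a)‖ ^ 2) l (𝓝 (‖φ a‖ ^ 2)) :=
    (((φ.continuous.tendsto a).comp (hl.tendsto_mul_right a)).norm).pow 2
  refine le_of_tendsto hlim ?_
  filter_upwards [hsa] with e ⟨he, hnorm⟩
  calc ‖φ (e * a)‖ ^ 2 = ‖φ (star e * a)‖ ^ 2 := by rw [he.star_eq]
    _ ≤ ‖φ (star e * e)‖ * ‖φ (star a * a)‖ := norm_apply_star_mul_sq_le hφ e a
    _ ≤ C * ‖φ (star a * a)‖ := by gcongr; exact hC e hnorm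

theorem apply_eq_zero_of_apply_star_mul_self (hφ : ∀ a, 0 ≤ φ (star a * a)) {a : E}
    (ha : φ (star a * a) = 0) : φ a = 0 := by
  have h := norm_apply_sq_le hφ
    (fun c hc => φ.unit_le_opNorm _ (norm_star_mul_self_le_one hc)) a
  rw [ha, norm_zero, mul_zero] at h
  exact norm_eq_zero.1 (pow_eq_zero_iff two_ne_zero |>.1 (h.antisymm (sq_nonneg _)))

theorem opNorm_le_of_apply_star_mul_self_le (hφ : ∀ a, 0 ≤ φ (star a * a)) {C : ℝ}
    (hC : ∀ c, ‖c‖ ≤ 1 → ‖φ (star c * c)‖ ≤ C) : ‖φ‖ ≤ C := by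
  have hC0 : 0 ≤ C := (norm_nonneg _).trans (hC 0 (by simp))
  refine ContinuousLinearMap.opNorm_le_of_unit_norm hC0 fun a ha => ?_
  refine le_of_sq_le_sq ?_ hC0
  calc ‖φ a‖ ^ 2 ≤ C * ‖φ (star a * a)‖ := norm_apply_sq_le hφ hC a
    _ ≤ C ^ 2 := by rw [sq]; gcongr; exact hC a ha.le

theorem IsState.one_mem_closure (hφ : IsState φ) :
    1 ∈ closure ((fun c => φ (star c * c)) '' Metric.closedBall 0 1) := by
  rw [Metric.mem_closure_iff]
  intro ε hε
  by_contra! hfar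
  have hbound (c : E) (hc : ‖c‖ ≤ 1) : ‖φ (star c * c)‖ ≤ 1 - ε := by
    have hle : ‖φ (star c * c)‖ ≤ 1 :=
      hφ.2 ▸ φ.unit_le_opNorm _ (norm_star_mul_self_le_one hc)
    have hdist := hfar _ (Set.mem_image_of_mem _ (mem_closedBall_zero_iff.2 hc))
    rw [Complex.eq_coe_norm_of_nonneg (hφ.1 c), dist_eq_norm, ← Complex.ofReal_one,
      ← Complex.ofReal_sub, Complex.norm_of_nonneg (sub_nonneg.2 hle)] at hdist
    linarith
  linarith [opNorm_le_of_apply_star_mul_self_le hφ.1 hbound, hφ.2]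

theorem eq_one_of_norm_two_sub_le_one {z : ℂ} (h2 : ‖2 - z‖ ≤ 1) (h1 : ‖z‖ ≤ 1) : z = 1 := by
  have hre : 1 ≤ z.re := by
    have := (Complex.re_le_norm _).trans h2
    simp only [Complex.sub_re, Complex.re_ofNat] at this
    linarith
  have hnorm : z.re = ‖z‖ := (Complex.re_le_norm z).antisymm (h1.trans hre)
  rw [Complex.eq_coe_norm_of_nonneg (Complex.re_eq_norm.1 hnorm), h1.antisymm (hnorm ▸ hre)]
  rfl

-- The extension `g` is unital because `‖2 * e - 1‖ ≤ 1` in the unitization for `0 ≤ e ≤ 1`, so that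
-- `‖2 * φ e - g 1‖ ≤ 1` while `φ e` can be chosen close to `1`.
theorem exists_unitization_extension (hφ : ‖φ‖ ≤ 1)
    (h : 1 ∈ closure ((fun c => φ (star c * c)) '' Metric.closedBall 0 1)) :
    ∃ g : Unitization ℂ E →L[ℂ] ℂ, ‖g‖ ≤ 1 ∧ g 1 = 1 ∧ ∀ a : E, g a = φ a := by
  let := CStarAlgebra.spectralOrder (Unitization ℂ E)
  have := CStarAlgebra.spectralOrderedRing (Unitization ℂ E)
  obtain ⟨g, hext, hnorm⟩ := exists_extension_norm_eq_of_linearIsometry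
    (⟨Unitization.inrHom ℂ ℂ E, Unitization.norm_inr⟩ : E →ₗᵢ[ℂ] Unitization ℂ E) φ
  replace hext (a : E) : g a = φ a := hext a
  have hg : ‖g‖ ≤ 1 := hnorm.trans_le hφ
  have hsub : (fun c => φ (star c * c)) '' Metric.closedBall 0 1 ⊆ {z | ‖2 * z - g 1‖ ≤ 1} := by
    rintro _ ⟨c, hc, rfl⟩
    have hc1 : ‖((star c * c : E) : Unitization ℂ E)‖ ≤ 1 :=
      (Unitization.norm_inr (𝕜 := ℂ) _).trans_le
        (norm_star_mul_self_le_one (mem_closedBall_zero_iff.1 hc))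
    have hc0 : 0 ≤ ((star c * c : E) : Unitization ℂ E) := by
      rw [Unitization.inr_mul, Unitization.inr_star]
      exact star_mul_self_nonneg _
    have happly : g (2 * ((star c * c : E) : Unitization ℂ E) - 1) = 2 * φ (star c * c) - g 1 := by
      rw [map_sub, two_mul, two_mul, map_add, hext]
    calc ‖2 * φ (star c * c) - g 1‖ = ‖g (2 * ((star c * c : E) : Unitization ℂ E) - 1)‖ := by
          rw [happly]
      _ ≤ ‖g‖ := g.unit_le_opNorm _ (norm_two_mul_sub_one_le_one hc0 hc1)
      _ ≤ 1 := hg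
  have h2 : ‖2 * 1 - g 1‖ ≤ 1 :=
    closure_minimal hsub (isClosed_le (by fun_prop) continuous_const) h
  rw [mul_one] at h2
  exact ⟨g, hg, eq_one_of_norm_two_sub_le_one h2 ((g.unit_le_opNorm 1 norm_one.le).trans hg), hext⟩

theorem apply_star_mul_self_nonneg_of_one_mem_closure (hφ : ‖φ‖ ≤ 1)
    (h : 1 ∈ closure ((fun c => φ (star c * c)) '' Metric.closedBall 0 1)) (a : E) :
    0 ≤ φ (star a * a) := by
  let := CStarAlgebra.spectralOrder (Unitization ℂ E)
  have := CStarAlgebra.spectralOrderedRing (Unitization ℂ E)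
  obtain ⟨g, hg, hone, hext⟩ := exists_unitization_extension hφ h
  rw [← hext, Unitization.inr_mul, Unitization.inr_star]
  exact apply_nonneg_of_apply_one hg hone (star_mul_self_nonneg _)

theorem isState_iff_one_mem_closure :
    IsState φ ↔
      ‖φ‖ ≤ 1 ∧ 1 ∈ closure ((fun c => φ (star c * c)) '' Metric.closedBall 0 1) := by
  refine ⟨fun hφ => ⟨hφ.2.le, hφ.one_mem_closure⟩, fun ⟨hle, h⟩ =>
    ⟨apply_star_mul_self_nonneg_of_one_mem_closure hle h, hle.antisymm ?_⟩⟩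
  have hsub : (fun c => φ (star c * c)) '' Metric.closedBall 0 1 ⊆ Metric.closedBall 0 ‖φ‖ := by
    rintro _ ⟨c, hc, rfl⟩
    exact mem_closedBall_zero_iff.2
      (φ.unit_le_opNorm _ (norm_star_mul_self_le_one (mem_closedBall_zero_iff.1 hc)))
  simpa using closure_minimal hsub Metric.isClosed_closedBall h

theorem IsState.of_extends {B : NonUnitalStarSubalgebra ℂ E} (hB : IsClosed (B : Set E))
    {φ : ↥B →L[ℂ] ℂ} (hφ : IsState φ) {σ : E →L[ℂ] ℂ} (hσ : ‖σ‖ ≤ 1)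
    (hext : ∀ b : ↥B, σ b = φ b) : IsState σ := by
  refine isState_iff_one_mem_closure.2 ⟨hσ, closure_mono ?_ hφ.one_mem_closure⟩
  rintro _ ⟨c, hc, rfl⟩
  exact ⟨c, by simpa using hc, hext (star c * c)⟩

theorem IsState.of_apply_star_mul_self (hφ : ‖φ‖ ≤ 1) {a : E} (ha : a ≠ 0)
    (h : φ (star a * a) = ‖star a * a‖) : IsState φ := by
  refine isState_iff_one_mem_closure.2 ⟨hφ, subset_closure ⟨(‖a‖⁻¹ : ℂ) • a, ?_, ?_⟩⟩
  · simp [norm_smul, ha]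
  · have hne : (‖a‖ : ℂ) ≠ 0 := by simpa using ha
    simp only [star_smul, smul_mul_smul_comm, map_smul, h, CStarRing.norm_star_mul_self,
      Complex.star_def, map_inv₀, Complex.conj_ofReal, Complex.ofReal_mul, smul_eq_mul]
    field_simp

end States

theorem isExtreme_closedBall_sphere {E : Type*} [SeminormedAddCommGroup E] [NormedSpace ℝ E]
    (r : ℝ) : IsExtreme ℝ (Metric.closedBall (0 : E) r) (Metric.sphere 0 r) := by
  refine ⟨Metric.sphere_subset_closedBall, ?_⟩
  rintro x hx y hy _ hz ⟨s, t, hs, ht, hst, rfl⟩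
  rw [mem_closedBall_zero_iff] at hx hy
  rw [mem_sphere_zero_iff_norm] at hz ⊢
  refine hx.antisymm (le_of_mul_le_mul_left ?_ hs)
  have hle : s * r + t * r ≤ s * ‖x‖ + t * r :=
    calc s * r + t * r = ‖s • x + t • y‖ := by rw [← add_mul, hst, one_mul, hz]
      _ ≤ s * ‖x‖ + t * ‖y‖ := by
        simpa [norm_smul, abs_of_pos hs, abs_of_pos ht] using norm_add_le (s • x) (t • y)
      _ ≤ s * ‖x‖ + t * r := by gcongr
  linarith

theorem zero_mem_extremePoints_Ici {E : Type*} [AddCommGroup E] [PartialOrder E]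
    [IsOrderedAddMonoid E] [Module ℝ E] [PosSMulMono ℝ E] :
    (0 : E) ∈ (Set.Ici (0 : E)).extremePoints ℝ := by
  refine ⟨Set.mem_Ici.2 le_rfl, ?_⟩
  rintro x hx y hy ⟨s, t, hs, ht, -, h⟩
  have h0 := (add_eq_zero_iff_of_nonneg (smul_nonneg hs.le hx) (smul_nonneg ht.le hy)).1 h
  exact (smul_eq_zero.1 h0.1).resolve_left hs.ne'

section PureStates

variable {E : Type*} [NonUnitalCStarAlgebra E]

variable (E) in
/-- The quasi-states of `E`: its positive linear functionals of norm at most one. Unlike states,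
they are stable under restriction to C⋆-subalgebras. -/
def quasiStates : Set (E →L[ℂ] ℂ) :=
  {φ | (∀ a, 0 ≤ φ (star a * a)) ∧ ‖φ‖ ≤ 1}

theorem isExtreme_quasiStates_states : IsExtreme ℝ (quasiStates E) {φ | IsState φ} := by
  refine ⟨fun φ hφ => ⟨hφ.1, hφ.2.le⟩, fun φ hφ ψ hψ χ hχ hmem => ⟨hφ.1, ?_⟩⟩
  exact mem_sphere_zero_iff_norm.1 <| (isExtreme_closedBall_sphere 1).2
    (mem_closedBall_zero_iff.2 hφ.2) (mem_closedBall_zero_iff.2 hψ.2)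
    (mem_sphere_zero_iff_norm.2 hχ.2) hmem

theorem isExtreme_states_apply_eq {a : E} {z : ℂ} {t : Set ℂ}
    (ht : ∀ φ : E →L[ℂ] ℂ, IsState φ → φ a ∈ t) (hz : z ∈ t.extremePoints ℝ) :
    IsExtreme ℝ {φ : E →L[ℂ] ℂ | IsState φ} {φ | IsState φ ∧ φ a = z} :=
  isExtreme_fiber ((ContinuousLinearMap.apply ℂ ℂ a).toLinearMap.restrictScalars ℝ) ht hz

theorem isExtreme_states_eqOn_zero {S : Set E} (hS : ∀ a ∈ S, star a * a ∈ S) :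
    IsExtreme ℝ {φ : E →L[ℂ] ℂ | IsState φ} {φ | IsState φ ∧ Set.EqOn φ 0 S} := by
  refine ⟨fun φ hφ => hφ.1, fun φ hφ ψ hψ χ hχ hmem => ⟨hφ, fun a ha => ?_⟩⟩
  have hext := isExtreme_states_apply_eq (a := star a * a) (fun φ hφ => hφ.1 a)
    zero_mem_extremePoints_Ici
  exact apply_eq_zero_of_apply_star_mul_self hφ.1
    (hext.2 hφ hψ ⟨hχ.1, hχ.2 (hS a ha)⟩ hmem).2

theorem isCompact_weakDual_eqOn (S : Set E) (f : E → ℂ) :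
    IsCompact {φ : WeakDual ℂ E | ‖WeakDual.toStrongDual φ‖ ≤ 1 ∧ Set.EqOn φ f S} := by
  have hball : IsCompact {φ : WeakDual ℂ E | ‖WeakDual.toStrongDual φ‖ ≤ 1} := by
    simpa [Set.preimage] using WeakDual.isCompact_closedBall (𝕜 := ℂ) (0 : StrongDual ℂ E) 1
  refine hball.inter_right (t := {φ : WeakDual ℂ E | Set.EqOn φ f S}) ?_
  simp only [Set.EqOn, Set.ofPred_forall]
  exact isClosed_biInter fun a _ => isClosed_eq (WeakDual.eval_continuous a) continuous_const

theorem exists_isPureState_eqOn {S : Set E} {f : E → ℂ}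
    (hne : ∃ φ : E →L[ℂ] ℂ, ‖φ‖ ≤ 1 ∧ Set.EqOn φ f S)
    (hstate : ∀ φ : E →L[ℂ] ℂ, ‖φ‖ ≤ 1 → Set.EqOn φ f S → IsState φ)
    (hext : IsExtreme ℝ {φ : E →L[ℂ] ℂ | IsState φ} {φ | IsState φ ∧ Set.EqOn φ f S}) :
    ∃ φ : E →L[ℂ] ℂ, IsPureState φ ∧ Set.EqOn φ f S := by
  have : LocallyConvexSpace ℝ (WeakDual ℂ E) :=
    WeakBilin.locallyConvexSpace (𝕜 := ℂ) (B := topDualPairing ℂ E)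
  obtain ⟨φ, hφ⟩ := (isCompact_weakDual_eqOn S f).extremePoints_nonempty hne
  have heq : {φ : E →L[ℂ] ℂ | ‖φ‖ ≤ 1 ∧ Set.EqOn φ f S} = {φ | IsState φ ∧ Set.EqOn φ f S} :=
    Set.ext fun φ => ⟨fun h => ⟨hstate φ h.1 h.2, h.2⟩, fun h => ⟨h.1.2.le, h.2⟩⟩
  have hmem : WeakDual.toStrongDual φ ∈
      {φ : E →L[ℂ] ℂ | IsState φ ∧ Set.EqOn φ f S}.extremePoints ℝ := heq ▸ hφ
  exact ⟨_, hext.extremePoints_subset_extremePoints hmem, hφ.1.2⟩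

theorem exists_isPureState_apply_star_mul_self_ne_zero {a : E} (ha : a ≠ 0) :
    ∃ φ : E →L[ℂ] ℂ, IsPureState φ ∧ φ (star a * a) ≠ 0 := by
  have hd : ‖star a * a‖ ≠ 0 := by simpa using ha
  have hne : ∃ φ : E →L[ℂ] ℂ, ‖φ‖ ≤ 1 ∧ φ (star a * a) = ‖star a * a‖ :=
    (exists_dual_vector ℂ (star a * a) hd).imp fun φ hφ => ⟨hφ.1.le, hφ.2⟩
  have hext : IsExtreme ℝ {φ : E →L[ℂ] ℂ | IsState φ}
      {φ | IsState φ ∧ φ (star a * a) = ‖star a * a‖} :=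
    isExtreme_states_apply_eq (t := Metric.closedBall 0 ‖star a * a‖)
      (fun φ hφ => by simpa [hφ.2] using φ.le_opNorm (star a * a))
      (StrictConvexSpace.sphere_subset_extremePoints_closedBall _ hd (by simp))
  obtain ⟨φ, hφ, heq⟩ := exists_isPureState_eqOn (S := {star a * a}) (f := fun x => ‖x‖)
    (by simpa using hne) (fun φ hφ h => .of_apply_star_mul_self hφ ha (by simpa using h))
    (by simpa using hext)
  exact ⟨φ, hφ, by simpa [heq rfl] using ha⟩

end PureStates

theorem norm_mul_star_sub_star_sq_le {R : Type*} [NonUnitalNormedRing R] [StarRing R]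
    [CStarRing R] {e : R} (he : IsSelfAdjoint e) (hnorm : ‖e‖ ≤ 1) (a : R) :
    ‖e * star a - star a‖ ^ 2 ≤ 2 * ‖e * (star a * a) - star a * a‖ := by
  have hmul : (e * star a - star a) * star (e * star a - star a) =
      (e * (star a * a) - star a * a) * e - (e * (star a * a) - star a * a) := by
    rw [star_sub, star_mul, star_star, he.star_eq]
    noncomm_ring
  rw [sq, ← CStarRing.norm_self_mul_star, hmul, two_mul]
  refine (norm_sub_le _ _).trans (add_le_add_left ?_ _)
  exact (norm_mul_le _ _).trans (mul_le_of_le_one_right (norm_nonneg _) hnorm)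

section ClosedIdeals

variable {A : Type*} [NonUnitalCStarAlgebra A] {L : TwoSidedIdeal A}

theorem smul_mem_of_isClosed (hL : IsClosed (L : Set A)) (c : ℂ) {a : A} (ha : a ∈ L) :
    c • a ∈ L := by
  obtain ⟨l, hl, -⟩ := exists_isApproximateUnit_isSelfAdjoint A
  have := hl.neBot
  refine hL.mem_of_tendsto ((hl.tendsto_mul_right a).const_smul c) (.of_forall fun e => ?_)
  rw [← smul_mul_assoc]
  exact L.mul_mem_left _ _ ha

/-- The largest star-subalgebra contained in the closed two-sided ideal `L`. It is a C⋆-algebra,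
and its approximate unit serves to show that it is all of `L`. -/
def starPart (L : TwoSidedIdeal A) (hL : IsClosed (L : Set A)) : NonUnitalStarSubalgebra ℂ A where
  carrier := {a | a ∈ L ∧ star a ∈ L}
  add_mem' ha hb := ⟨L.add_mem ha.1 hb.1, by rw [star_add]; exact L.add_mem ha.2 hb.2⟩
  zero_mem' := ⟨L.zero_mem, by rw [star_zero]; exact L.zero_mem⟩
  mul_mem' ha hb := ⟨L.mul_mem_left _ _ hb.1, by rw [star_mul]; exact L.mul_mem_left _ _ ha.2⟩
  smul_mem' c a ha := ⟨smul_mem_of_isClosed hL c ha.1, by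
    rw [star_smul]; exact smul_mem_of_isClosed hL _ ha.2⟩
  star_mem' ha := ⟨ha.2, by rw [star_star]; exact ha.1⟩

theorem star_mem_of_isClosed (hL : IsClosed (L : Set A)) {a : A} (ha : a ∈ L) : star a ∈ L := by
  have : IsClosed (starPart L hL : Set A) := hL.inter (hL.preimage continuous_star)
  let h : starPart L hL := ⟨star a * a, L.mul_mem_left _ _ ha, by
    rw [star_mul, star_star]; exact L.mul_mem_left _ _ ha⟩
  obtain ⟨l, hl, hsa⟩ := exists_isApproximateUnit_isSelfAdjoint (starPart L hL)
  have := hl.neBot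
  have hbound : ∀ᶠ e : starPart L hL in l, ‖(e : A) * star a - star a‖ ^ 2 ≤ 2 * ‖e * h - h‖ :=
    hsa.mono fun e he =>
      norm_mul_star_sub_star_sq_le (congrArg Subtype.val he.1.star_eq) he.2 a
  have hlim : Tendsto (fun e => 2 * ‖e * h - h‖) l (𝓝 0) := by
    simpa using (((hl.tendsto_mul_right h).sub_const h).norm).const_mul 2
  have hsq : Tendsto (fun e : starPart L hL => ‖(e : A) * star a - star a‖ ^ 2) l (𝓝 0) :=
    squeeze_zero' (.of_forall fun _ => sq_nonneg _) hbound hlim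
  have hnorm : Tendsto (fun e : starPart L hL => ‖(e : A) * star a - star a‖) l (𝓝 0) := by
    simpa using hsq.sqrt
  exact hL.mem_of_tendsto (tendsto_iff_norm_sub_tendsto_zero.2 hnorm)
    (.of_forall fun e => L.mul_mem_right _ _ e.2.1)

end ClosedIdeals

section Lifts

variable {A : Type*} [NonUnitalCStarAlgebra A] {B : NonUnitalStarSubalgebra ℂ A}
  {L : TwoSidedIdeal A}

/-- The pullback of `B → A ⧸ L ← A`, which serves in place of the quotient C⋆-algebra `A ⧸ L`. -/
def pullback (B : NonUnitalStarSubalgebra ℂ A) (L : TwoSidedIdeal A) (hL : IsClosed (L : Set A)) :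
    NonUnitalStarSubalgebra ℂ (↥B × A) where
  carrier := {p | (p.1 : A) - p.2 ∈ L}
  add_mem' {p q} hp hq := by
    change (p.1 + q.1 : A) - (p.2 + q.2) ∈ L
    rw [add_sub_add_comm]
    exact L.add_mem hp hq
  zero_mem' := by simp
  mul_mem' {p q} hp hq := by
    change (p.1 * q.1 : A) - p.2 * q.2 ∈ L
    rw [show (p.1 * q.1 : A) - p.2 * q.2 = (p.1 - p.2) * q.1 + p.2 * (q.1 - q.2) by noncomm_ring]
    exact L.add_mem (L.mul_mem_right _ _ hp) (L.mul_mem_left _ _ hq)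
  smul_mem' c p hp := by simpa [smul_sub] using smul_mem_of_isClosed hL c hp
  star_mem' hp := by simpa using star_mem_of_isClosed hL hp

theorem mem_pullback {hL : IsClosed (L : Set A)} {p : ↥B × A} :
    p ∈ pullback B L hL ↔ (p.1 : A) - p.2 ∈ L :=
  Iff.rfl

theorem isClosed_pullback (hL : IsClosed (L : Set A)) :
    IsClosed (pullback B L hL : Set (↥B × A)) :=
  hL.preimage (by fun_prop : Continuous fun p : ↥B × A => (p.1 : A) - p.2)

theorem norm_snd_pullback (hB : IsClosed (B : Set A)) (hL : IsClosed (L : Set A))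
    (hBL : (B : Set A) ∩ L = {0}) (p : pullback B L hL) : ‖(p : ↥B × A).2‖ = ‖p‖ := by
  have := isClosed_pullback (B := B) hL
  let f : pullback B L hL →⋆ₙₐ[ℂ] A :=
    (NonUnitalStarAlgHom.snd ℂ ↥B A).comp (NonUnitalStarSubalgebraClass.subtype _)
  refine NonUnitalStarAlgHom.norm_map f ?_ p
  rw [injective_iff_map_eq_zero]
  rintro ⟨⟨b, a⟩, hp⟩ (rfl : a = 0)
  have hb : (b : A) ∈ (B : Set A) ∩ L := ⟨b.2, by simpa [mem_pullback] using hp⟩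
  rw [hBL] at hb
  ext
  · simpa using hb
  · rfl

theorem exists_extension_eqOn_zero (hB : IsClosed (B : Set A)) (hL : IsClosed (L : Set A))
    (hBL : (B : Set A) ∩ L = {0}) (φ : ↥B →L[ℂ] ℂ) :
    ∃ σ : A →L[ℂ] ℂ, ‖σ‖ ≤ ‖φ‖ ∧ (∀ b : ↥B, σ b = φ b) ∧ Set.EqOn σ 0 L := by
  let i : pullback B L hL →ₗᵢ[ℂ] A :=
    ⟨LinearMap.snd ℂ ↥B A ∘ₗ NonUnitalSubalgebraClass.subtype (pullback B L hL),
      norm_snd_pullback hB hL hBL⟩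
  let f : pullback B L hL →L[ℂ] ℂ := LinearMap.mkContinuous
    (φ ∘ₗ LinearMap.fst ℂ ↥B A ∘ₗ NonUnitalSubalgebraClass.subtype (pullback B L hL)) ‖φ‖
    fun p => φ.le_opNorm_of_le (norm_fst_le _)
  obtain ⟨σ, hσ, hnorm⟩ := exists_extension_norm_eq_of_linearIsometry i f
  refine ⟨σ, hnorm.trans_le (LinearMap.mkContinuous_norm_le _ (norm_nonneg φ) _), fun b => ?_,
    fun x hx => ?_⟩
  · exact hσ ⟨(b, b), by simp [mem_pullback]⟩
  · exact (hσ ⟨(0, x), by simpa [mem_pullback] using hx⟩).trans (map_zero φ)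

theorem exists_isState_extension (hB : IsClosed (B : Set A)) (hL : IsClosed (L : Set A))
    (hBL : (B : Set A) ∩ L = {0}) {φ : ↥B →L[ℂ] ℂ} (hφ : IsState φ) :
    ∃ σ : A →L[ℂ] ℂ, IsState σ ∧ (∀ b : ↥B, σ b = φ b) ∧ Set.EqOn σ 0 L := by
  obtain ⟨σ, hnorm, hext, hzero⟩ := exists_extension_eqOn_zero hB hL hBL φ
  exact ⟨σ, hφ.of_extends hB (hnorm.trans_eq hφ.2) hext, hext, hzero⟩

theorem isExtreme_states_extends (hB : IsClosed (B : Set A)) {φ : ↥B →L[ℂ] ℂ}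
    (hφ : IsPureState φ) :
    IsExtreme ℝ {σ : A →L[ℂ] ℂ | IsState σ} {σ | IsState σ ∧ ∀ b : ↥B, σ b = φ b} := by
  let i : ↥B →L[ℂ] A := ⟨NonUnitalSubalgebraClass.subtype B, continuous_subtype_val⟩
  let T : (A →L[ℂ] ℂ) →ₗ[ℝ] (↥B →L[ℂ] ℂ) :=
    ((ContinuousLinearMap.precomp ℂ i).restrictScalars ℝ).toLinearMap
  have hmaps : Set.MapsTo T {σ | IsState σ} (quasiStates ↥B) :=
    fun σ hσ => ⟨fun b => hσ.1 b, ContinuousLinearMap.opNorm_le_bound _ zero_le_one fun b =>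
      hσ.2 ▸ σ.le_opNorm b⟩
  have hext := isExtreme_fiber T hmaps
    (isExtreme_quasiStates_states.extremePoints_subset_extremePoints hφ)
  have hfiber (σ : A →L[ℂ] ℂ) : T σ = φ ↔ ∀ b : ↥B, σ b = φ b := ContinuousLinearMap.ext_iff
  simp only [hfiber] at hext
  exact hext

theorem exists_isPureState_extension (hB : IsClosed (B : Set A)) (hL : IsClosed (L : Set A))
    (hBL : (B : Set A) ∩ L = {0}) {φ : ↥B →L[ℂ] ℂ} (hφ : IsPureState φ) :
    ∃ σ : A →L[ℂ] ℂ, IsPureState σ ∧ (∀ b : ↥B, σ b = φ b) ∧ Set.EqOn σ 0 L := by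
  obtain ⟨σ₀, hσ₀, hext₀, hzero₀⟩ := exists_isState_extension hB hL hBL hφ.1
  have heqOn (σ : A →L[ℂ] ℂ) :
      Set.EqOn σ σ₀ (B ∪ L : Set A) ↔ (∀ b : ↥B, σ b = φ b) ∧ Set.EqOn σ 0 L := by
    rw [Set.eqOn_union]
    refine and_congr ?_ ⟨fun h => h.trans hzero₀, fun h => h.trans hzero₀.symm⟩
    simp only [← hext₀, Set.EqOn, Subtype.forall, SetLike.mem_coe]
  have hextreme : IsExtreme ℝ {σ : A →L[ℂ] ℂ | IsState σ}
      {σ | IsState σ ∧ Set.EqOn σ σ₀ (B ∪ L : Set A)} := by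
    simp only [heqOn]
    have hL_ext := isExtreme_states_eqOn_zero (S := (L : Set A)) fun a ha => L.mul_mem_left _ _ ha
    convert (isExtreme_states_extends hB hφ).inter hL_ext using 1
    exact Set.ext fun σ => and_and_left
  obtain ⟨σ, hσ, h⟩ := exists_isPureState_eqOn ⟨σ₀, hσ₀.2.le, Set.eqOn_refl _ _⟩
    (fun σ hσ h => hφ.1.of_extends hB hσ ((heqOn σ).1 h).1) hextreme
  exact ⟨σ, hσ, (heqOn σ).1 h⟩

end Lifts

theorem isClosed_Kset {E F : Type*} [Mul E] [TopologicalSpace E] [ContinuousMul E] [Zero F]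
    [TopologicalSpace F] [T1Space F] {ψ : E → F} (hψ : Continuous ψ) : IsClosed (Kset ψ) := by
  simp only [Kset, Set.ofPred_forall]
  exact isClosed_iInter fun x => isClosed_iInter fun y =>
    isClosed_singleton.preimage (by fun_prop : Continuous fun a => ψ (x * a * y))

section Faithfulness

variable {A : Type*} [NonUnitalCStarAlgebra A]

/-- `Kset φ`, the largest two-sided ideal on which `φ` vanishes. -/
def kernelIdeal (φ : A →L[ℂ] ℂ) : TwoSidedIdeal A :=
  .mk' (Kset φ)
    (fun x y => by simp)
    (fun ha hb x y => by rw [mul_add, add_mul, map_add, ha, hb, add_zero])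
    (fun ha x y => by rw [mul_neg, neg_mul, map_neg, ha, neg_zero])
    (fun {a b} hb x y => by rw [← mul_assoc, hb])
    (fun {a b} ha x y => by rw [← mul_assoc, mul_assoc, ha])

@[simp]
theorem coe_kernelIdeal (φ : A →L[ℂ] ℂ) : (kernelIdeal φ : Set A) = Kset φ :=
  TwoSidedIdeal.coe_mk' ..

theorem coe_subset_Kset_of_eqOn_zero {L : TwoSidedIdeal A} {φ : A →L[ℂ] ℂ} (h : Set.EqOn φ 0 L) :
    (L : Set A) ⊆ Kset φ :=
  fun _ ha _ _ => h (L.mul_mem_right _ _ (L.mul_mem_left _ _ ha))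

variable {B : NonUnitalStarSubalgebra ℂ A}

theorem inter_iInter_Kset_eq (hB : IsClosed (B : Set A))
    {σ : (↥B →L[ℂ] ℂ) → (A →L[ℂ] ℂ)} (hσ : ∀ φ, IsPureState φ → ∀ b : ↥B, σ φ b = φ b) :
    (B : Set A) ∩ ⋂ φ ∈ {φ | IsPureState φ}, Kset (σ φ) = {0} := by
  refine Set.Subset.antisymm ?_ ?_
  · rintro b ⟨hb, hK⟩
    by_contra hne
    let c : ↥B := star ⟨b, hb⟩ * ⟨b, hb⟩
    have hc : c ≠ 0 :=
      (CStarRing.star_mul_self_ne_zero_iff _).2 fun h => hne (congrArg Subtype.val h)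
    obtain ⟨φ, hφ, happly⟩ := exists_isPureState_apply_star_mul_self_ne_zero hc
    apply happly
    have hzero : σ φ (star b * b * (star b * b)) = 0 := by
      simpa only [mul_assoc] using Set.mem_iInter₂.1 hK φ hφ (star b) (star b * b)
    rw [← hσ φ hφ, ← hzero]
    simp [c, mul_assoc]
  · rintro _ rfl
    exact ⟨B.zero_mem, by simp [Kset]⟩

/-- Every lift of `Φ` to functionals on `A` satisfying `P` is jointly essentially faithful; here `P`
is either `IsState` or `IsPureState`. -/
def LiftsFaithful (P : (A →L[ℂ] ℂ) → Prop) (Φ : Set (↥B →L[ℂ] ℂ)) : Prop :=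
  ∀ σ : (↥B →L[ℂ] ℂ) → (A →L[ℂ] ℂ),
    (∀ φ ∈ Φ, P (σ φ) ∧ ∀ b : ↥B, σ φ (b : A) = φ b) → (⋂ φ ∈ Φ, Kset ⇑(σ φ)) = ({0} : Set A)

theorem EssentialIncl.liftsFaithful (hB : IsClosed (B : Set A)) (hB0 : B = ⊥ → Subsingleton A)
    (hess : EssentialIncl (B : Set A)) :
    LiftsFaithful IsState {φ : ↥B →L[ℂ] ℂ | IsPureState φ} := by
  intro σ hσ
  let K : TwoSidedIdeal A := ⨅ φ : {φ : ↥B →L[ℂ] ℂ // IsPureState φ}, kernelIdeal (σ φ)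
  have hK : (K : Set A) = ⋂ φ ∈ {φ | IsPureState φ}, Kset (σ φ) := by
    ext a
    simp only [K, SetLike.mem_coe, TwoSidedIdeal.mem_iInf, Subtype.forall, ← coe_kernelIdeal,
      Set.mem_iInter, Set.mem_ofPred_eq]
  have hBK : (B : Set A) ∩ K = {0} := by
    rw [hK]
    exact inter_iInter_Kset_eq hB fun φ hφ => (hσ φ hφ).2
  rw [← hK]
  by_cases huniv : (K : Set A) = Set.univ
  · rw [huniv, Set.inter_univ] at hBK
    have := hB0 (SetLike.coe_injective (hBK.trans NonUnitalStarAlgebra.coe_bot.symm))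
    exact Set.eq_singleton_iff_unique_mem.2 ⟨K.zero_mem, fun a _ => Subsingleton.elim a 0⟩
  · refine hess K ?_ huniv hBK
    rw [hK]
    exact isClosed_biInter fun φ _ => isClosed_Kset (σ φ).continuous

theorem LiftsFaithful.essentialIncl {P : (A →L[ℂ] ℂ) → Prop} {Φ : Set (↥B →L[ℂ] ℂ)}
    (hΦ : LiftsFaithful P Φ)
    (hlift : ∀ L : TwoSidedIdeal A, IsClosed (L : Set A) → (B : Set A) ∩ L = {0} → ∀ φ ∈ Φ,
      ∃ σ : A →L[ℂ] ℂ, P σ ∧ (∀ b : ↥B, σ b = φ b) ∧ Set.EqOn σ 0 L) :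
    EssentialIncl (B : Set A) := by
  intro L hL _ hBL
  choose! σ hP hext hzero using hlift L hL hBL
  refine (Set.singleton_subset_iff.2 L.zero_mem).antisymm' ?_
  rw [← hΦ σ fun φ hφ => ⟨hP φ hφ, hext φ hφ⟩]
  exact Set.subset_iInter₂ fun φ hφ => coe_subset_Kset_of_eqOn_zero (hzero φ hφ)

theorem NondegSet.subsingleton (hnd : NondegSet (B : Set A)) (hB : B = ⊥) : Subsingleton A := by
  subst hB
  have hspan : Submodule.span ℂ {x : A | ∃ b ∈ ((⊥ : NonUnitalStarSubalgebra ℂ A) : Set A),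
      ∃ a : A, x = b * a} = ⊥ := by
    rw [Submodule.span_eq_bot]
    rintro _ ⟨b, hb, a, rfl⟩
    rw [NonUnitalStarAlgebra.mem_bot.1 hb, zero_mul]
  rw [NondegSet, hspan, Submodule.bot_coe, closure_singleton] at hnd
  exact Set.subsingleton_of_univ_subsingleton (hnd ▸ Set.subsingleton_singleton)

end Faithfulness

theorem stmt5_general {A : Type*} [NonUnitalCStarAlgebra A] (B : NonUnitalStarSubalgebra ℂ A)
    (hB : IsClosed (B : Set A)) (hB0 : B = ⊥ → Subsingleton A) :
    List.TFAE [EssentialIncl (B : Set A),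
      ∃ Φ : Set (↥B →L[ℂ] ℂ), (∀ φ ∈ Φ, IsState φ) ∧ LiftsFaithful IsState Φ,
      ∃ Φ : Set (↥B →L[ℂ] ℂ), (∀ φ ∈ Φ, IsPureState φ) ∧ LiftsFaithful IsState Φ,
      ∃ Φ : Set (↥B →L[ℂ] ℂ), (∀ φ ∈ Φ, IsPureState φ) ∧ LiftsFaithful IsPureState Φ] := by
  tfae_have 1 → 3 := fun hess => ⟨_, fun _ => id, hess.liftsFaithful hB hB0⟩
  tfae_have 3 → 2 := fun ⟨Φ, hpure, hΦ⟩ => ⟨Φ, fun φ hφ => (hpure φ hφ).1, hΦ⟩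
  tfae_have 2 → 1 := fun ⟨_, hstate, hΦ⟩ => hΦ.essentialIncl fun _ hL hBL φ hφ =>
    exists_isState_extension hB hL hBL (hstate φ hφ)
  tfae_have 3 → 4 := fun ⟨Φ, hpure, hΦ⟩ =>
    ⟨Φ, hpure, fun σ hσ => hΦ σ fun φ hφ => ⟨(hσ φ hφ).1.1, (hσ φ hφ).2⟩⟩
  tfae_have 4 → 1 := fun ⟨_, hpure, hΦ⟩ => hΦ.essentialIncl fun _ hL hBL φ hφ =>
    exists_isPureState_extension hB hL hBL (hpure φ hφ)
  tfae_finish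

/-- For a non-degenerate `C*`-inclusion `B ⊆ A`, the following are equivalent:
(i) the inclusion is essential;
(ii) some set of states of `B` has all its `A`-lifts jointly essentially faithful;
(iii) some set of pure states of `B` has all its `A`-lifts jointly essentially faithful;
(iii') some set of pure states of `B` has all its pure `A`-lifts jointly essentially faithful. -/
theorem stmt5 {A : Type*} [NonUnitalCStarAlgebra A]
    (B : NonUnitalStarSubalgebra ℂ A) (hBclosed : IsClosed (B : Set A))
    (hnd : NondegSet (B : Set A)) :
    (EssentialIncl (B : Set A) ↔
      (∃ Φ : Set (↥B →L[ℂ] ℂ), (∀ φ ∈ Φ, IsState φ) ∧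
        ∀ σ : (↥B →L[ℂ] ℂ) → (A →L[ℂ] ℂ),
          (∀ φ ∈ Φ, IsState (σ φ) ∧ ∀ b : ↥B, σ φ (b : A) = φ b) →
          (⋂ φ ∈ Φ, Kset ⇑(σ φ)) = ({0} : Set A))) ∧
    (EssentialIncl (B : Set A) ↔
      (∃ Φ : Set (↥B →L[ℂ] ℂ), (∀ φ ∈ Φ, IsPureState φ) ∧
        ∀ σ : (↥B →L[ℂ] ℂ) → (A →L[ℂ] ℂ),
          (∀ φ ∈ Φ, IsState (σ φ) ∧ ∀ b : ↥B, σ φ (b : A) = φ b) →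
          (⋂ φ ∈ Φ, Kset ⇑(σ φ)) = ({0} : Set A))) ∧
    (EssentialIncl (B : Set A) ↔
      (∃ Φ : Set (↥B →L[ℂ] ℂ), (∀ φ ∈ Φ, IsPureState φ) ∧
        ∀ σ : (↥B →L[ℂ] ℂ) → (A →L[ℂ] ℂ),
          (∀ φ ∈ Φ, IsPureState (σ φ) ∧ ∀ b : ↥B, σ φ (b : A) = φ b) →
          (⋂ φ ∈ Φ, Kset ⇑(σ φ)) = ({0} : Set A))) := by
  have h := stmt5_general B hBclosed hnd.subsingleton
  exact ⟨h.out 0 1, h.out 0 2, h.out 0 3⟩
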